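/- arXiv:1311.3690 — 2 statements merged into one kernel-verified Lean document; each statement's English description precedes it below -/
import Mathlib

section
/- Let φ : ℝ^{n+1} → (0, ∞] be a positive convex function and α > 0. Then the function Φ(t) = (∫_{ℝⁿ} φ(t, x)^{-n-α} dx)^{-1/α} is convex on ℝ. -/
open MeasureTheory
open scoped Pointwise

lemma bm_one {A B C : Set ℝ} (hA : IsCompact A) (hB : IsCompact B) (hA0 : A.Nonempty)
    (hB0 : B.Nonempty) {u v : ℝ} (hu : 0 < u) (hv : 0 < v)
    (h : ∀ x ∈ A, ∀ y ∈ B, u * x + v * y ∈ C) :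
    ENNReal.ofReal u * volume A + ENNReal.ofReal v * volume B ≤ volume C := by
  obtain ⟨x, hx, hxA⟩ := hA.exists_isGreatest hA0
  obtain ⟨y, hy, hyB⟩ := hB.exists_isLeast hB0
  set A' : Set ℝ := (fun z => z + v * y) '' (u • A) with hA'
  set B' : Set ℝ := (fun z => z + u * x) '' (v • B) with hB'
  have e1 : volume A' = ENNReal.ofReal u * volume A := by
    rw [hA', Set.image_add_right, measure_preimage_add_right, Measure.addHaar_smul]
    simp [abs_of_pos hu]
  have e2 : volume B' = ENNReal.ofReal v * volume B := by
    rw [hB', Set.image_add_right, measure_preimage_add_right, Measure.addHaar_smul]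
    simp [abs_of_pos hv]
  have hBm : MeasurableSet B' :=
    ((hB.smul v).image (by fun_prop)).isClosed.measurableSet
  have hd : AEDisjoint volume A' B' := by
    refine measure_mono_null (t := {u * x + v * y}) ?_ (by simp)
    rintro z ⟨⟨_, ⟨a, ha, rfl⟩, rfl⟩, ⟨_, ⟨b, hb, rfl⟩, h2⟩⟩
    have h1 := mul_le_mul_of_nonneg_left (hxA ha) hu.le
    have h3 := mul_le_mul_of_nonneg_left (hyB hb) hv.le
    simp only [smul_eq_mul, Set.mem_singleton_iff] at *
    linarith
  rw [← e1, ← e2, ← measure_union₀ hBm.nullMeasurableSet hd]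
  apply measure_mono
  rintro z (⟨_, ⟨a, ha, rfl⟩, rfl⟩ | ⟨_, ⟨b, hb, rfl⟩, rfl⟩)
  · exact h a ha y hy
  · have := h x hx b hb
    simp only [smul_eq_mul]
    rwa [add_comm]

lemma bernoulli_neg {α y : ℝ} (hα : 0 < α) (hy : 0 < y) : 1 - α * (y - 1) ≤ y ^ (-α) := by
  rw [Real.rpow_def_of_pos hy]
  have h1 := Real.add_one_le_exp (Real.log y * -α)
  have h2 := Real.log_le_sub_one_of_pos hy
  nlinarith

lemma mean_ineq {α a b u v I I0 I1 : ℝ} (hα : 0 < α) (ha : 0 < a) (hb : 0 < b) (hu : 0 < u)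
    (hv : 0 < v) (hI0 : 0 < I0) (hI1 : 0 < I1)
    (h : u * (a ^ (1 + α) * I0) + v * (b ^ (1 + α) * I1) ≤ (u * a + v * b) ^ (1 + α) * I) :
    I ^ (-1 / α) ≤ u * I0 ^ (-1 / α) + v * I1 ^ (-1 / α) := by
  set c := u * a + v * b with hc
  have hc0 : 0 < c := by positivity
  set J0 := I0 ^ (-1 / α) with hJ0
  set J1 := I1 ^ (-1 / α) with hJ1
  have pJ0 : 0 < J0 := by positivity
  have pJ1 : 0 < J1 := by positivity
  set J := u * J0 + v * J1 with hJ
  have pJ : 0 < J := by positivity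
  have key : ∀ K : ℝ, 0 < K → (K ^ (-1 / α)) ^ (-α) = K := by
    intro K hK
    rw [← Real.rpow_mul hK.le]
    have : -1 / α * -α = 1 := by field_simp
    rw [this, Real.rpow_one]
  have term : ∀ d K : ℝ, 0 < d → 0 < K →
      d * c ^ α * (1 - α * (c * K ^ (-1 / α) / (d * J) - 1)) ≤ d ^ (1 + α) * K * J ^ α := by
    intro d K hd hK
    have pK : 0 < K ^ (-1 / α) := by positivity
    have h1 := bernoulli_neg hα (y := c * K ^ (-1 / α) / (d * J)) (by positivity)
    have h2 : (c * K ^ (-1 / α) / (d * J)) ^ (-α) = d ^ α * K * J ^ α / c ^ α := by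
      rw [Real.div_rpow (by positivity) (by positivity), Real.mul_rpow hc0.le pK.le,
        Real.mul_rpow hd.le pJ.le, key K hK, Real.rpow_neg hc0.le, Real.rpow_neg hd.le,
        Real.rpow_neg pJ.le]
      have := Real.rpow_pos_of_pos hc0 α
      have := Real.rpow_pos_of_pos hd α
      have := Real.rpow_pos_of_pos pJ α
      field_simp
    rw [h2] at h1
    have h3 := mul_le_mul_of_nonneg_left h1 (show 0 ≤ d * c ^ α by positivity)
    refine h3.trans (le_of_eq ?_)
    have := Real.rpow_pos_of_pos hc0 α
    rw [Real.rpow_add hd, Real.rpow_one]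
    field_simp
  have t0 := mul_le_mul_of_nonneg_left (term a I0 ha hI0) hu.le
  have t1 := mul_le_mul_of_nonneg_left (term b I1 hb hI1) hv.le
  rw [← hJ0] at t0
  rw [← hJ1] at t1
  have pJα := Real.rpow_pos_of_pos pJ α
  have pcα := Real.rpow_pos_of_pos hc0 α
  have h' := mul_le_mul_of_nonneg_right h pJα.le
  have hsum : u * (a * c ^ α * (1 - α * (c * J0 / (a * J) - 1))) +
      v * (b * c ^ α * (1 - α * (c * J1 / (b * J) - 1))) = c * c ^ α := by
    have : u * (a * c ^ α * (1 - α * (c * J0 / (a * J) - 1))) +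
      v * (b * c ^ α * (1 - α * (c * J1 / (b * J) - 1))) =
      c ^ α * ((u * a + v * b) * (1 + α) - α * c * ((u * J0 + v * J1) / J)) := by
      field_simp
      ring
    rw [this, ← hJ, ← hc, div_self pJ.ne']
    ring
  have h4 : c * c ^ α * 1 ≤ c * c ^ α * (I * J ^ α) := by
    rw [Real.rpow_add hc0, Real.rpow_one] at h'
    nlinarith
  have h5 : 1 ≤ I * J ^ α := le_of_mul_le_mul_left h4 (by positivity)
  have h6 : J ^ (-α) ≤ I := by
    rw [Real.rpow_neg pJ.le, inv_eq_one_div, div_le_iff₀ pJα]; exact h5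
  have h7 := Real.rpow_le_rpow_of_nonpos (Real.rpow_pos_of_pos pJ _) h6
    (show -1 / α ≤ 0 from div_nonpos_of_nonpos_of_nonneg (by norm_num) hα.le)
  refine h7.trans (le_of_eq ?_)
  rw [← Real.rpow_mul pJ.le]
  have : -α * (-1 / α) = 1 := by field_simp
  rw [this, Real.rpow_one]

/-- linear growth -/
def LinGrowth (g : ℝ → ℝ) : Prop := ∃ c : ℝ, 0 < c ∧ ∀ y, c * (1 + |y|) ≤ g y

lemma LinGrowth.integrable {g : ℝ → ℝ} (hg : LinGrowth g) (hc : Continuous g) {p : ℝ}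
    (hp : 1 < p) : Integrable (fun y => g y ^ (-p)) := by
  obtain ⟨c, hc0, h⟩ := hg
  have hpos : ∀ y, 0 < g y := fun y => lt_of_lt_of_le (by positivity) (h y)
  have h1 : Integrable (fun y : ℝ => c ^ (-p) * (1 + ‖y‖) ^ (-p)) :=
    (integrable_one_add_norm (by simpa using hp)).const_mul _
  refine h1.mono' ?_ ?_
  · exact (hc.rpow_const (fun y => Or.inl (hpos y).ne')).aestronglyMeasurable
  · refine Filter.Eventually.of_forall fun y => ?_
    have := hpos y
    rw [Real.norm_of_nonneg (by positivity), ← Real.mul_rpow hc0.le (by positivity)]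
    exact Real.rpow_le_rpow_of_nonpos (by positivity) (h y) (by linarith)

lemma LinGrowth.exists_min {g : ℝ → ℝ} (hg : LinGrowth g) (hc : Continuous g) :
    ∃ x, ∀ y, g x ≤ g y := by
  obtain ⟨c, hc0, h⟩ := hg
  refine hc.exists_forall_le ?_
  refine Filter.tendsto_atTop_mono h ?_
  refine Filter.Tendsto.const_mul_atTop hc0 ?_
  exact Filter.tendsto_atTop_add_const_left _ _ (tendsto_norm_cocompact_atTop (E := ℝ))

lemma LinGrowth.compact {g : ℝ → ℝ} (hg : LinGrowth g) (hc : Continuous g) (s : ℝ) :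
    IsCompact {x | g x ≤ s} := by
  obtain ⟨c, hc0, h⟩ := hg
  refine Metric.isCompact_of_isClosed_isBounded (isClosed_le hc continuous_const) ?_
  refine (Metric.isBounded_closedBall (x := (0:ℝ)) (r := s / c)).subset ?_
  intro x hx
  simp only [Set.mem_ofPred_eq] at hx
  rw [mem_closedBall_zero_iff, Real.norm_eq_abs, le_div_iff₀ hc0]
  have := h x
  nlinarith

lemma level_iff {g a τ p : ℝ} (hg : 0 < g) (ha : 0 < a) (hτ : 0 < τ) (hp : 0 < p) :
    τ ≤ (g / a) ^ (-p) ↔ g ≤ a * τ ^ (-p⁻¹) := by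
  rw [Real.rpow_neg (by positivity), le_inv_comm₀ hτ (by positivity),
    ← Real.le_rpow_inv_iff_of_pos (by positivity) (by positivity) hp, div_le_iff₀ ha,
    Real.inv_rpow hτ.le, Real.rpow_neg hτ.le, mul_comm]

lemma lint_scale {g : ℝ → ℝ} (hpos : ∀ x, 0 < g x) {a p : ℝ} (ha : 0 < a)
    (hi : Integrable (fun x => g x ^ (-p))) (hc : Continuous g) (hp : 0 < p) :
    ENNReal.ofReal (a ^ p * ∫ x, g x ^ (-p)) =
      ∫⁻ τ in Set.Ioi (0:ℝ), volume {x | g x ≤ a * τ ^ (-p⁻¹)} := by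
  have h0 : ∀ x, a ^ p * g x ^ (-p) = (g x / a) ^ (-p) := by
    intro x
    rw [Real.div_rpow (hpos x).le ha.le, Real.rpow_neg ha.le, div_inv_eq_mul, mul_comm]
  rw [← integral_const_mul]
  simp_rw [h0]
  have hcont : Continuous (fun x => (g x / a) ^ (-p)) :=
    (hc.div_const a).rpow_const (fun y => Or.inl (div_pos (hpos y) ha).ne')
  have hnn : ∀ x, 0 ≤ (g x / a) ^ (-p) := fun x => 
    Real.rpow_nonneg (div_pos (hpos x) ha).le _
  rw [ofReal_integral_eq_lintegral_ofReal, lintegral_eq_lintegral_meas_le]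
  · refine setLIntegral_congr_fun measurableSet_Ioi fun τ hτ => ?_
    congr 1
    ext x
    exact level_iff (hpos x) ha hτ hp
  · exact Filter.Eventually.of_forall hnn
  · exact hcont.aemeasurable
  · have := hi.const_mul (a ^ p)
    simpa only [h0] using this
  · exact Filter.Eventually.of_forall hnn

lemma LinGrowth.pos {g : ℝ → ℝ} (hg : LinGrowth g) (x : ℝ) : 0 < g x := by
  obtain ⟨c, hc, h⟩ := hg
  exact lt_of_lt_of_le (by positivity) (h x)

lemma LinGrowth.integral_pos {g : ℝ → ℝ} (hl : LinGrowth g) (hc : Continuous g) {p : ℝ}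
    (hp : 1 < p) : 0 < ∫ x, g x ^ (-p) := by
  have hq : ∀ x, 0 < g x ^ (-p) := fun x => Real.rpow_pos_of_pos (hl.pos x) _
  rw [integral_pos_iff_support_of_nonneg (fun x => (hq x).le) (hl.integrable hc hp)]
  have : Function.support (fun x => g x ^ (-p)) = Set.univ :=
    Set.eq_univ_of_forall fun x => (hq x).ne'
  simp [this]

lemma fiber_continuous {F : Type*} [AddCommGroup F] [Module ℝ F] {φ : F × ℝ → ℝ}
    (hφ : ConvexOn ℝ Set.univ φ) (z : F) : Continuous (fun y => φ (z, y)) := by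
  refine (ConvexOn.locallyLipschitz ?_).continuous
  refine ⟨convex_univ, fun x _ y _ a b ha hb hab => ?_⟩
  have h := hφ.2 (Set.mem_univ (z, x)) (Set.mem_univ (z, y)) ha hb hab
  have e : a • (z, x) + b • (z, y) = (z, a • x + b • y) := by
    ext
    · simp [← add_smul, hab]
    · simp
  rwa [e] at h

lemma one_dim {g0 g1 g : ℝ → ℝ} (c0 : Continuous g0) (c1 : Continuous g1) (c : Continuous g)
    (l0 : LinGrowth g0) (l1 : LinGrowth g1) (l : LinGrowth g) {u v : ℝ} (hu : 0 < u) (hv : 0 < v)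
    (h : ∀ x y, g (u * x + v * y) ≤ u * g0 x + v * g1 y) {α : ℝ} (hα : 0 < α) :
    (∫ x, g x ^ (-(1 + α))) ^ (-1 / α) ≤ u * (∫ x, g0 x ^ (-(1 + α))) ^ (-1 / α) +
      v * (∫ x, g1 x ^ (-(1 + α))) ^ (-1 / α) := by
  have hp : 1 < 1 + α := by linarith
  have hp0 : 0 < 1 + α := by linarith
  have pos : ∀ {g : ℝ → ℝ}, LinGrowth g → ∀ x, 0 < g x := fun hl => hl.pos
  have ipos : ∀ {g : ℝ → ℝ}, LinGrowth g → Continuous g → 0 < ∫ x, g x ^ (-(1 + α)) :=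
    fun hl hc => hl.integral_pos hc hp
  obtain ⟨x0, m0⟩ := l0.exists_min c0
  obtain ⟨x1, m1⟩ := l1.exists_min c1
  have ha := pos l0 x0
  have hb := pos l1 x1
  refine mean_ineq hα ha hb hu hv (ipos l0 c0) (ipos l1 c1) ?_
  have hcc : 0 < u * g0 x0 + v * g1 x1 := by positivity
  have P0 := (ipos l0 c0).le
  have P1 := (ipos l1 c1).le
  rw [← ENNReal.ofReal_le_ofReal_iff (mul_nonneg (by positivity) (ipos l c).le),
    ENNReal.ofReal_add (by positivity) (by positivity), ENNReal.ofReal_mul hu.le,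
    ENNReal.ofReal_mul hv.le, lint_scale (pos l0) ha (l0.integrable c0 hp) c0 hp0,
    lint_scale (pos l1) hb (l1.integrable c1 hp) c1 hp0,
    lint_scale (pos l) hcc (l.integrable c hp) c hp0]
  have anti : ∀ (g : ℝ → ℝ) (a : ℝ), 0 < a → AEMeasurable
      (fun τ : ℝ => volume {x | g x ≤ a * τ ^ (-(1 + α)⁻¹)}) (volume.restrict (Set.Ioi 0)) := by
    intro g a ha
    refine aemeasurable_restrict_of_antitoneOn measurableSet_Ioi ?_
    intro s hs t ht hst
    refine measure_mono fun x hx => ?_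
    refine le_trans hx (mul_le_mul_of_nonneg_left ?_ ha.le)
    exact Real.rpow_le_rpow_of_nonpos hs hst (by simp; positivity)
  rw [← lintegral_const_mul'' _ (anti g0 _ ha), ← lintegral_const_mul'' _ (anti g1 _ hb),
    ← lintegral_add_left' ((anti g0 _ ha).const_mul _)]
  refine setLIntegral_mono' measurableSet_Ioi fun τ hτ => ?_
  have hτ0 : 0 < τ := hτ
  set s := τ ^ (-(1 + α)⁻¹) with hs
  have hs0 : 0 < s := by positivity
  by_cases hs1 : 1 ≤ s
  · refine bm_one (l0.compact c0 _) (l1.compact c1 _) ⟨x0, ?_⟩ ⟨x1, ?_⟩ hu hv ?_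
    · exact le_mul_of_one_le_right ha.le hs1
    · exact le_mul_of_one_le_right hb.le hs1
    · intro x hx y hy
      have := h x y
      have h1 := mul_le_mul_of_nonneg_left hx hu.le
      have h2 := mul_le_mul_of_nonneg_left hy hv.le
      simp only [Set.mem_ofPred_eq] at *
      linarith
  · push Not at hs1
    have E0 : {x | g0 x ≤ g0 x0 * s} = ∅ := by
      ext x; simp only [Set.mem_ofPred_eq, Set.mem_empty_iff_false, iff_false, not_le]
      nlinarith [m0 x]
    have E1 : {x | g1 x ≤ g1 x1 * s} = ∅ := by
      ext x; simp only [Set.mem_ofPred_eq, Set.mem_empty_iff_false, iff_false, not_le]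
      nlinarith [m1 x]
    simp [E0, E1]

lemma linGrowth_of {g : ℝ → ℝ} (hg : ConvexOn ℝ Set.univ g) (hpos : ∀ y, 0 < g y)
    (h1 : ∃ y, 0 < y ∧ g 0 < g y) (h2 : ∃ y, y < 0 ∧ g 0 < g y) : LinGrowth g := by
  have hc : Continuous g := hg.locallyLipschitz.continuous
  obtain ⟨y1, hy1, hg1⟩ := h1
  obtain ⟨y2, hy2, hg2⟩ := h2
  obtain ⟨m, hm, hmin⟩ := (isCompact_Icc (a := y2) (b := y1)).exists_isMinOn
    ⟨0, hy2.le, hy1.le⟩ hc.continuousOn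
  have key : ∀ w y, w ≠ 0 → 1 ≤ y / w → g 0 + y / w * (g w - g 0) ≤ g y := by
    intro w y hw hyw
    have hr : 0 < y / w := by linarith
    have h := hg.2 (Set.mem_univ (0:ℝ)) (Set.mem_univ y)
      (show 0 ≤ 1 - (y / w)⁻¹ by have := inv_le_one_of_one_le₀ hyw; linarith)
      (show 0 ≤ (y / w)⁻¹ by positivity) (by ring)
    have hy0 : y ≠ 0 := by rintro rfl; simp at hr
    have e : (1 - (y / w)⁻¹) • (0:ℝ) + (y / w)⁻¹ • y = w := by
      simp only [smul_eq_mul]; field_simp; ring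
    rw [e] at h
    simp only [smul_eq_mul] at h
    have h' := mul_le_mul_of_nonneg_left h hr.le
    have e2 : y / w * ((1 - (y / w)⁻¹) * g 0 + (y / w)⁻¹ * g y) = (y / w) * g 0 - g 0 + g y := by
      field_simp
    rw [e2] at h'
    linarith
  set k1 := (g y1 - g 0) / y1 with hk1
  set k2 := (g y2 - g 0) / (-y2) with hk2
  have pk1 : 0 < k1 := div_pos (by linarith) hy1
  have pk2 : 0 < k2 := div_pos (by linarith) (by linarith)
  have hR : 0 < 1 + (y1 - y2) := by linarith
  refine ⟨min (min (g 0) (g m / (1 + (y1 - y2)))) (min k1 k2),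
    lt_min (lt_min (hpos 0) (div_pos (hpos m) hR)) (lt_min pk1 pk2), fun y => ?_⟩
  set c := min (min (g 0) (g m / (1 + (y1 - y2)))) (min k1 k2) with hcdef
  have c1 : c ≤ g 0 := (min_le_left _ _).trans (min_le_left _ _)
  have c2 : c ≤ g m / (1 + (y1 - y2)) := (min_le_left _ _).trans (min_le_right _ _)
  have c3 : c ≤ k1 := (min_le_right _ _).trans (min_le_left _ _)
  have c4 : c ≤ k2 := (min_le_right _ _).trans (min_le_right _ _)
  have c0 : 0 < c := lt_min (lt_min (hpos 0) (div_pos (hpos m) hR)) (lt_min pk1 pk2)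
  rcases le_total y1 y with h | h
  · have := key y1 y hy1.ne' ((one_le_div hy1).2 h)
    have e : y / y1 * (g y1 - g 0) = k1 * y := by rw [hk1]; ring
    rw [abs_of_nonneg (by linarith)]
    nlinarith
  · rcases le_total y y2 with h' | h'
    · have := key y2 y hy2.ne ((one_le_div_of_neg hy2).2 h')
      have e : y / y2 * (g y2 - g 0) = k2 * (-y) := by rw [hk2]; field_simp
      rw [abs_of_nonpos (by linarith)]
      nlinarith
    · have h3 : g m ≤ g y := hmin ⟨h', h⟩
      rw [le_div_iff₀ hR] at c2
      have : |y| ≤ y1 - y2 := by rw [abs_le]; constructor <;> linarith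
      nlinarith

lemma not_bdd {h : ℝ → ℝ} {p C : ℝ} (hp : 0 ≤ p) (hpos : ∀ y, 0 < h y)
    (hi : Integrable (fun y => h y ^ (-p))) {S : Set ℝ} (hS : MeasurableSet S)
    (hv : volume S = ⊤) (hC : ∀ y ∈ S, h y ≤ C) : False := by
  have hne : S.Nonempty := by
    rw [Set.nonempty_iff_ne_empty]; rintro rfl; simp at hv
  obtain ⟨y, hy⟩ := hne
  have C0 : 0 < C := (hpos y).trans_le (hC y hy)
  have : IntegrableOn (fun _ : ℝ => C ^ (-p)) S := by
    refine Integrable.mono' hi.integrableOn (by fun_prop) ?_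
    refine (ae_restrict_iff' hS).2 (Filter.Eventually.of_forall fun y hy => ?_)
    rw [Real.norm_of_nonneg (by positivity)]
    exact Real.rpow_le_rpow_of_nonpos (hpos y) (hC y hy) (by linarith)
  rw [integrableOn_const_iff] at this
  have h1 := Real.rpow_pos_of_pos C0 (-p)
  rcases this with h | h
  · exact h1.ne' (by simpa using h)
  · simp [hv] at h

lemma fiber_growth {F : Type*} [AddCommGroup F] [Module ℝ F] {φ : F × ℝ → ℝ}
    (hφ : ConvexOn ℝ Set.univ φ) (hpos : ∀ z, 0 < φ z) {p : ℝ} (hp : 0 ≤ p) (z0 : F)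
    (hi : Integrable (fun y => φ (z0, y) ^ (-p))) (z : F) :
    LinGrowth (fun y => φ (z, y)) := by
  have bd : ∀ y, φ (z, 2 * y) ≤ φ (z, 0) → 
      φ (z0, y) ≤ (1 / 2) * φ (z, 0) + (1 / 2) * φ ((2:ℝ) • z0 - z, 0) := by
    intro y hy
    have h := hφ.2 (Set.mem_univ (z, 2 * y)) (Set.mem_univ ((2:ℝ) • z0 - z, (0:ℝ)))
      (show (0:ℝ) ≤ 1 / 2 by norm_num) (show (0:ℝ) ≤ 1 / 2 by norm_num) (by norm_num)
    have e : (1 / 2 : ℝ) • (z, 2 * y) + (1 / 2 : ℝ) • ((2:ℝ) • z0 - z, (0:ℝ)) = (z0, y) := by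
      ext
      · simp only [Prod.fst_add, Prod.smul_fst]
        module
      · simp
    rw [e] at h
    simp only [smul_eq_mul] at h
    linarith
  refine linGrowth_of ?_ (fun y => hpos _) ?_ ?_
  · refine ⟨convex_univ, fun x _ y _ a b ha hb hab => ?_⟩
    have h := hφ.2 (Set.mem_univ (z, x)) (Set.mem_univ (z, y)) ha hb hab
    have e : a • (z, x) + b • (z, y) = (z, a • x + b • y) := by
      ext
      · simp [← add_smul, hab]
      · simp
    rwa [e] at h
  · by_contra hcon
    push Not at hcon
    exact not_bdd hp (fun y => hpos _) hi measurableSet_Ioi (Real.volume_Ioi (a := 0))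
      (fun y hy => bd y (hcon _ (mul_pos two_pos hy)))
  · by_contra hcon
    push Not at hcon
    exact not_bdd hp (fun y => hpos _) hi measurableSet_Iio (Real.volume_Iio (a := 0))
      (fun y hy => bd y (hcon _ (mul_neg_of_pos_of_neg two_pos hy)))

lemma one_dim_convex {F : Type*} [AddCommGroup F] [Module ℝ F] {φ : F × ℝ → ℝ}
    (hφ : ConvexOn ℝ Set.univ φ) {α : ℝ} (hα : 0 < α)
    (hl : ∀ z, LinGrowth (fun y => φ (z, y))) :
    ConvexOn ℝ Set.univ (fun z => (∫ y, φ (z, y) ^ (-(1 + α))) ^ (-1 / α)) := by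
  have hc := fiber_continuous hφ
  rw [convexOn_iff_forall_pos]
  refine ⟨convex_univ, fun z0 _ z1 _ a b ha hb hab => ?_⟩
  refine one_dim (hc _) (hc _) (hc _) (hl _) (hl _) (hl _) ha hb ?_ hα
  intro x y
  exact hφ.2 (Set.mem_univ (z0, x)) (Set.mem_univ (z1, y)) ha.le hb.le hab

lemma main_pi {E : Type*} [AddCommGroup E] [Module ℝ E] (n : ℕ) : ∀ {α : ℝ} (_ : 0 < α)
    {φ : E × (Fin n → ℝ) → ℝ} (_ : ∀ p, 0 < φ p) (_ : ConvexOn ℝ Set.univ φ)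
    (_ : ∀ t, Integrable (fun x => φ (t, x) ^ (-(n : ℝ) - α))),
    ConvexOn ℝ Set.univ (fun t => (∫ x, φ (t, x) ^ (-(n : ℝ) - α)) ^ (-1 / α)) := by
  induction n with
  | zero =>
    intro α hα φ hpos hφ hi
    have e : ∀ t, (∫ x, φ (t, x) ^ (-((0:ℕ) : ℝ) - α)) ^ (-1 / α) = φ (t, 0) := by
      intro t
      rw [integral_unique]
      simp only [Nat.cast_zero, neg_zero, zero_sub]
      have h1 : (volume : Measure (Fin 0 → ℝ)).real Set.univ = 1 := by
        simp [Measure.real, volume_pi]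
      rw [h1, one_smul, ← Real.rpow_mul (hpos _).le]
      have : -α * (-1 / α) = 1 := by field_simp
      rw [this, Real.rpow_one]
      congr 2
      exact Subsingleton.elim _ _
    simp_rw [e]
    refine ⟨convex_univ, fun x _ y _ a b ha hb hab => ?_⟩
    simpa using hφ.2 (Set.mem_univ (x, 0)) (Set.mem_univ (y, 0)) ha hb hab
  | succ n ih =>
    intro α hα φ hpos hφ hi
    set φ' : (E × (Fin n → ℝ)) × ℝ → ℝ := fun q => φ (q.1.1, Fin.cons q.2 q.1.2) with hφ'
    have hconv' : ConvexOn ℝ Set.univ φ' := by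
      refine ⟨convex_univ, fun x _ y _ a b ha hb hab => ?_⟩
      have h := hφ.2 (Set.mem_univ (x.1.1, Fin.cons x.2 x.1.2))
        (Set.mem_univ (y.1.1, Fin.cons y.2 y.1.2)) ha hb hab
      refine le_trans (le_of_eq ?_) h
      refine congrArg φ ?_
      ext i
      · rfl
      · refine Fin.cases ?_ (fun j => ?_) i <;> simp
    set p : ℝ := 1 + (n + α) with hp
    have hpe : -((n + 1 : ℕ) : ℝ) - α = -p := by rw [hp]; push_cast; ring
    have hβ : (0:ℝ) < n + α := by positivity
    have hmp := (volume_preserving_piFinSuccAbove (fun _ : Fin (n + 1) => ℝ) 0).symm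
    have hs : ∀ q : ℝ × (Fin n → ℝ), (MeasurableEquiv.piFinSuccAbove (fun _ : Fin (n + 1) => ℝ) 0).symm q
        = Fin.cons q.1 q.2 := fun q => Fin.insertNth_zero' q.1 q.2
    have hint' : ∀ t, Integrable (fun q : ℝ × (Fin n → ℝ) => φ' ((t, q.2), q.1) ^ (-p))
        (volume.prod volume) := by
      intro t
      have := hmp.integrable_comp_of_integrable (hi t)
      rw [hpe] at this
      have e : (fun q : ℝ × (Fin n → ℝ) => φ' ((t, q.2), q.1) ^ (-p)) = (fun x => φ (t, x) ^ (-p)) ∘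
          (MeasurableEquiv.piFinSuccAbove (fun _ : Fin (n + 1) => ℝ) 0).symm := by
        ext q
        simp only [Function.comp, hs, hφ']
      rw [e]
      exact this
    have hinteq : ∀ t, ∫ x, φ (t, x) ^ (-p) = ∫ x : Fin n → ℝ, ∫ y : ℝ, φ' ((t, x), y) ^ (-p) := by
      intro t
      rw [← hmp.integral_comp (MeasurableEquiv.measurableEmbedding _)]
      rw [← integral_prod_symm _ (hint' t)]
      simp only [hs, hφ']
      rfl
    have hl : ∀ z, LinGrowth (fun y => φ' (z, y)) := by
      intro z
      obtain ⟨x0, hx0⟩ := (hint' 0).prod_left_ae.exists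
      exact fiber_growth hconv' (fun q => hpos _) (by positivity) (0, x0) hx0 z
    have hψ := one_dim_convex hconv' hβ hl
    set ψ : E × (Fin n → ℝ) → ℝ := fun z => (∫ y, φ' (z, y) ^ (-(1 + (n + α)))) ^ (-1 / (n + α))
      with hψdef
    have hIpos : ∀ z, 0 < ∫ y, φ' (z, y) ^ (-(1 + (n + α))) :=
      fun z => (hl z).integral_pos (fiber_continuous hconv' z) (by linarith)
    have hψpos : ∀ z, 0 < ψ z := fun z => Real.rpow_pos_of_pos (hIpos z) _
    have hψpow : ∀ z, ψ z ^ (-(n : ℝ) - α) = ∫ y, φ' (z, y) ^ (-p) := by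
      intro z
      simp only [hψdef]
      rw [← Real.rpow_mul (hIpos z).le]
      have : -1 / ((n : ℝ) + α) * (-(n : ℝ) - α) = 1 := by field_simp; ring
      rw [this, Real.rpow_one]
    have := ih hα hψpos hψ (fun t => by
      simp_rw [hψpow]
      exact (hint' t).integral_prod_right)
    simp_rw [hψpow] at this
    simp_rw [hpe, hinteq]
    exact this

/-- Functional Brunn principle (dimensional Prékopa). -/
theorem dimensional_prekopa (n : ℕ) (α : ℝ) (hα : 0 < α)
    (φ : ℝ × EuclideanSpace ℝ (Fin n) → ℝ)
    (hφpos : ∀ p, 0 < φ p)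
    (hφconv : ConvexOn ℝ Set.univ φ)
    (hint : ∀ t : ℝ, Integrable (fun x => φ (t, x) ^ (-(n : ℝ) - α)))
    (hpos : ∀ t : ℝ, 0 < ∫ x, φ (t, x) ^ (-(n : ℝ) - α)) :
    ConvexOn ℝ Set.univ
      (fun t : ℝ => (∫ x, φ (t, x) ^ (-(n : ℝ) - α)) ^ (-1 / α)) := by
  have hmp := PiLp.volume_preserving_toLp (Fin n)
  have h := main_pi (E := ℝ) n hα (φ := fun q => φ (q.1, WithLp.toLp 2 q.2)) (fun q => hφpos _)
    ⟨convex_univ, fun x _ y _ a b ha hb hab =>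
      hφconv.2 (Set.mem_univ (x.1, WithLp.toLp 2 x.2)) (Set.mem_univ (y.1, WithLp.toLp 2 y.2))
        ha hb hab⟩
    (fun t => hmp.integrable_comp_of_integrable (hint t))
  have e : ∀ t : ℝ, ∫ x, φ (t, WithLp.toLp 2 x) ^ (-(n : ℝ) - α) =
      ∫ x, φ (t, x) ^ (-(n : ℝ) - α) := fun t =>
    hmp.integral_comp (MeasurableEquiv.toLp 2 (Fin n → ℝ)).measurableEmbedding
      (fun x => φ (t, x) ^ (-(n : ℝ) - α))
  simp only [e] at h
  exact h
end

section
/- Let F : (ℝⁿ)^N → ℝ₊ satisfy: for all x₁, …, x_N ∈ ℝⁿ and 0 ≤ sᵢ ≤ tᵢ (i ≤ N), F(s₁x₁, …, s_N x_N) ≥ F(t₁x₁, …, t_N x_N). If g₁, …, g_N : ℝ₊ → [0, 1] are integrable with ∫_{ℝⁿ} gᵢ(|x|) dx = 1 for each i, then ∫ F(x₁, …, x_N) Πᵢ gᵢ(|xᵢ|) dx ≤ ∫ F(x₁, …, x_N) Πᵢ 1_{[0, rₙ]}(|xᵢ|) dx, where rₙ is the radius of the Euclidean ball Dₙ of volume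 one. -/
open MeasureTheory

lemma cdf_level (κ : Measure ℝ) [IsFiniteMeasure κ] [NullSingletonClass κ] (c : ENNReal) :
    κ {x | κ (Set.Iic x) ≤ c} = min c (κ Set.univ) := by
  rcases le_or_gt (κ Set.univ) c with hc | hc
  · rw [min_eq_right hc]
    congr 1
    ext x
    simpa using (measure_mono (Set.subset_univ _)).trans hc
  rw [min_eq_left hc.le]
  set A := {x | κ (Set.Iic x) ≤ c} with hA
  have hlow : ∀ x ∈ A, ∀ y ≤ x, y ∈ A := fun x hx y hy =>
    (measure_mono (Set.Iic_subset_Iic.2 hy)).trans hx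
  obtain ⟨M, hM⟩ : ∃ M, c < κ (Set.Iic M) :=
    ((tendsto_measure_Iic_atTop κ).eventually (lt_mem_nhds hc)).exists
  have hbdd : BddAbove A := ⟨M, fun x hx => by
    by_contra! h
    exact absurd hM (not_lt.2 (hlow x hx M h.le))⟩
  rcases A.eq_empty_or_nonempty with he | hne
  · rw [he, measure_empty]
    symm
    have h1 : ∀ x, c < κ (Set.Iic x) := fun x => by
      by_contra! h
      have : x ∈ A := h
      simp [he] at this
    have h2 : (⋂ n : ℕ, Set.Iic (-(n:ℝ))) = ∅ := by
      ext x
      simp only [Set.mem_iInter, Set.mem_Iic, Set.mem_empty_iff_false, iff_false, not_forall, not_le]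
      obtain ⟨n, hn⟩ := exists_nat_gt (-x)
      exact ⟨n, by linarith⟩
    have h3 := Antitone.measure_iInter (μ := κ) (s := fun n : ℕ => Set.Iic (-(n:ℝ)))
      (fun a b hab => Set.Iic_subset_Iic.2 (by simpa using hab))
      (fun n => measurableSet_Iic.nullMeasurableSet) ⟨0, measure_ne_top _ _⟩
    rw [h2, measure_empty] at h3
    refine le_antisymm ?_ bot_le
    rw [h3]
    exact le_iInf fun n => (h1 _).le
  · have hlub := isLUB_csSup hne hbdd
    set b := sSup A
    have hio : Set.Iio b ⊆ A := fun x hx => by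
      obtain ⟨y, hy, hxy⟩ := (lt_isLUB_iff hlub).1 hx
      exact hlow y hy x hxy.le
    apply le_antisymm
    · calc κ A ≤ κ (Set.Iic b) := measure_mono fun x hx => hlub.1 hx
        _ = κ (Set.Iio b) := measure_congr Iio_ae_eq_Iic.symm
        _ ≤ c := ?_
      obtain ⟨u, hu, hub, hut⟩ := exists_seq_strictMono_tendsto b
      have h2 : Set.Iio b = ⋃ n, Set.Iic (u n) := by
        ext x
        simp only [Set.mem_Iio, Set.mem_iUnion, Set.mem_Iic]
        constructor
        · intro hx
          obtain ⟨n, hn⟩ := (hut.eventually (lt_mem_nhds hx)).exists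
          exact ⟨n, hn.le⟩
        · rintro ⟨n, hn⟩
          exact hn.trans_lt (hub n)
      rw [h2, Monotone.measure_iUnion (fun a b hab => Set.Iic_subset_Iic.2 (hu.monotone hab))]
      exact iSup_le fun n => hio (hub n)
    · calc c ≤ κ (Set.Iic b) := ?_
        _ = κ (Set.Iio b) := measure_congr Iio_ae_eq_Iic.symm
        _ ≤ κ A := measure_mono hio
      obtain ⟨u, hu, hub, hut⟩ := exists_seq_strictAnti_tendsto b
      have h2 : Set.Iic b = ⋂ n, Set.Iic (u n) := by
        ext x
        simp only [Set.mem_iInter, Set.mem_Iic]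
        constructor
        · intro hx n
          exact hx.trans (hub n).le
        · intro h
          exact ge_of_tendsto' hut h
      rw [h2, Antitone.measure_iInter (fun a b hab => Set.Iic_subset_Iic.2 (hu.antitone hab))
        (fun n => measurableSet_Iic.nullMeasurableSet) ⟨0, measure_ne_top _ _⟩]
      refine le_iInf fun n => ?_
      by_contra! h
      exact absurd (hlub.1 (show u n ∈ A from h.le)) (not_le.2 (hub n))

lemma cdf_level' (κ : Measure (Set.Ioi (0:ℝ))) [IsFiniteMeasure κ]
    (hac : κ ≪ Measure.comap Subtype.val volume) (c : ENNReal) :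
    κ {x | κ (Set.Iic x) ≤ c} = min c (κ Set.univ) := by
  have hm : Measurable (Subtype.val : Set.Ioi (0:ℝ) → ℝ) := measurable_subtype_coe
  have h1 : κ.map Subtype.val ≪ volume := by
    refine (hac.map hm).trans ?_
    rw [map_comap_subtype_coe measurableSet_Ioi]
    exact Measure.absolutelyContinuous_of_le Measure.restrict_le_self
  have : NullSingletonClass (κ.map Subtype.val) := ⟨fun x => h1 (by simp)⟩
  have h := cdf_level (κ.map Subtype.val) c
  have hmono : Monotone fun x => (κ.map Subtype.val) (Set.Iic x) := fun x y hxy =>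
    measure_mono (Set.Iic_subset_Iic.2 hxy)
  rw [Measure.map_apply hm (measurableSet_le hmono.measurable measurable_const),
    Measure.map_apply hm MeasurableSet.univ] at h
  rw [← Set.preimage_univ (f := (Subtype.val : Set.Ioi (0:ℝ) → ℝ)), ← h]
  congr 1
  ext x
  simp only [Set.mem_ofPred_eq, Set.mem_preimage]
  rw [Measure.map_apply hm measurableSet_Iic]
  rfl

lemma volumeIoiPow_Iic (k : ℕ) (x : Set.Ioi (0 : ℝ)) :
    Measure.volumeIoiPow k (Set.Iic x) = ENNReal.ofReal (x.1 ^ (k + 1) / (k + 1)) := by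
  rw [← Measure.volumeIoiPow_apply_Iio]
  apply measure_congr
  have : NullSingletonClass (Measure.volumeIoiPow k) := ⟨fun y => by
    apply withDensity_absolutelyContinuous
    rw [comap_subtype_coe_apply measurableSet_Ioi]
    simp⟩
  exact Iio_ae_eq_Iic.symm

lemma transport1 (k : ℕ) (h : Set.Ioi (0:ℝ) → ENNReal) (hh : ∀ r, h r ≤ 1) (R : Set.Ioi (0:ℝ))
    (hR : (Measure.volumeIoiPow k).withDensity h Set.univ = Measure.volumeIoiPow k (Set.Iic R)) :
    ∃ φ : Set.Ioi (0:ℝ) → Set.Ioi (0:ℝ), Measurable φ ∧ (∀ r, φ r ≤ r) ∧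
      ((Measure.volumeIoiPow k).withDensity h).map φ =
        (Measure.volumeIoiPow k).restrict (Set.Iic R) := by
  set ν := Measure.volumeIoiPow k with hν
  set κ := ν.withDensity h with hκ
  have : IsFiniteMeasure κ := ⟨by rw [hR, volumeIoiPow_Iic]; exact ENNReal.ofReal_lt_top⟩
  have hac : κ ≪ Measure.comap Subtype.val volume :=
    (withDensity_absolutelyContinuous _ _).trans (withDensity_absolutelyContinuous _ _)
  have hle : κ ≤ ν := by
    conv_rhs => rw [← withDensity_one (μ := ν)]
    exact withDensity_mono (Filter.Eventually.of_forall hh)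
  set m : Set.Ioi (0:ℝ) → ℝ := fun r => (κ (Set.Iic r)).toReal with hm
  have hmmono : Monotone m := fun a b hab => ENNReal.toReal_mono (measure_ne_top _ _)
    (measure_mono (Set.Iic_subset_Iic.2 hab))
  have hk : (0:ℝ) < k + 1 := by positivity
  have hmle : ∀ r, m r ≤ r.1 ^ (k+1) / (k+1) := fun r => by
    apply ENNReal.toReal_le_of_le_ofReal
    · have := r.2.out; positivity
    · rw [← volumeIoiPow_Iic]; exact hle _
  have hm0 : ∀ r, 0 ≤ m r := fun r => ENNReal.toReal_nonneg
  let φ : Set.Ioi (0:ℝ) → Set.Ioi (0:ℝ) := fun r =>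
    ⟨if 0 < m r then ((k+1) * m r) ^ (((k+1 : ℕ):ℝ)⁻¹) else r.1, by
      have := r.2.out
      split_ifs with h0
      · exact Real.rpow_pos_of_pos (by positivity) _
      · exact r.2⟩
  have hφle : ∀ r a : Set.Ioi (0:ℝ), 0 < m r → (φ r ≤ a ↔ m r ≤ a.1 ^ (k+1) / (k+1)) := by
    intro r a h0
    rw [← Subtype.coe_le_coe]
    simp only [φ, if_pos h0]
    rw [Real.rpow_inv_le_iff_of_pos (by positivity) a.2.out.le (by positivity), Real.rpow_natCast,
      le_div_iff₀ hk, mul_comm]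
  have hφm : Measurable φ := by
    refine Measurable.subtype_mk ?_
    refine Measurable.ite (measurableSet_lt measurable_const hmmono.measurable) ?_
      measurable_subtype_coe
    exact (hmmono.measurable.const_mul _).pow_const _
  refine ⟨φ, hφm, fun r => ?_, ?_⟩
  · by_cases h0 : 0 < m r
    · exact (hφle r r h0).2 (hmle r)
    · rw [← Subtype.coe_le_coe]
      simp [φ, if_neg h0]
  · apply Measure.ext_of_Iic
    intro a
    rw [Measure.map_apply hφm measurableSet_Iic, Measure.restrict_apply measurableSet_Iic,
      Set.Iic_inter_Iic]
    have hnull : ∀ᵐ r ∂κ, 0 < m r := by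
      have := cdf_level' κ hac 0
      rw [zero_min] at this
      refine measure_mono_null ?_ this
      intro r hr
      have : m r = 0 := le_antisymm (not_lt.1 hr) (hm0 r)
      simp only [hm, ENNReal.toReal_eq_zero_iff, measure_ne_top, or_false] at this
      exact this.le
    have h1 : κ (φ ⁻¹' Set.Iic a) = κ {r | κ (Set.Iic r) ≤ ENNReal.ofReal (a.1 ^ (k+1) / (k+1))} := by
      apply measure_congr
      filter_upwards [hnull] with r hr
      apply propext
      change φ r ≤ a ↔ κ (Set.Iic r) ≤ _
      rw [hφle r a hr, ENNReal.le_ofReal_iff_toReal_le (measure_ne_top _ _)]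
      have := a.2.out; positivity
    rw [h1, cdf_level' κ hac, hR, volumeIoiPow_Iic, volumeIoiPow_Iic]
    rw [← volumeIoiPow_Iic, ← volumeIoiPow_Iic, ← volumeIoiPow_Iic]
    have hmo : Monotone fun x : Set.Ioi (0:ℝ) => Measure.volumeIoiPow k (Set.Iic x) :=
      fun x y hxy => measure_mono (Set.Iic_subset_Iic.2 hxy)
    exact (hmo.map_min (a := a) (b := R)).symm

lemma pi_wd {ι : Type*} [Fintype ι] {E : Type*} [MeasurableSpace E] (μ : Measure E) [SigmaFinite μ]
    (f : ι → E → ℝ) (hf : ∀ i, Integrable (f i) μ) (h0 : ∀ i x, 0 ≤ f i x) :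
    Measure.pi (fun i => μ.withDensity fun x => ENNReal.ofReal (f i x)) =
      (Measure.pi fun _ : ι => μ).withDensity fun X => ENNReal.ofReal (∏ i, f i (X i)) := by
  have : ∀ i, IsFiniteMeasure (μ.withDensity fun x => ENNReal.ofReal (f i x)) := fun i =>
    isFiniteMeasure_withDensity_ofReal (hf i).2
  apply Measure.pi_eq
  intro s hs
  rw [withDensity_apply _ (MeasurableSet.univ_pi hs), Measure.restrict_pi_pi,
    ← ofReal_integral_eq_lintegral_ofReal, integral_fintype_prod_eq_prod,
    ENNReal.ofReal_prod_of_nonneg]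
  · refine Finset.prod_congr rfl fun i _ => ?_
    rw [withDensity_apply _ (hs i), ← ofReal_integral_eq_lintegral_ofReal (hf i).restrict]
    exact Filter.Eventually.of_forall (h0 i)
  · intro i _
    exact integral_nonneg (h0 i)
  · exact Integrable.fintype_prod fun i => (hf i).restrict
  · exact Filter.Eventually.of_forall fun X => Finset.prod_nonneg fun i _ => h0 i _

lemma polar_map (k : ℕ) :
    ((volume : Measure (EuclideanSpace ℝ (Fin (k+1)))).toSphere.prod
      (Measure.volumeIoiPow k)).map
        (fun p : Metric.sphere (0 : EuclideanSpace ℝ (Fin (k+1))) 1 × Set.Ioi (0:ℝ) =>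
          p.2.1 • p.1.1) = volume := by
  have mp := (volume : Measure (EuclideanSpace ℝ (Fin (k+1)))).measurePreserving_homeomorphUnitSphereProd
  have hd : Module.finrank ℝ (EuclideanSpace ℝ (Fin (k+1))) - 1 = k := by simp
  rw [hd] at mp
  have mp2 := MeasurePreserving.symm
    (homeomorphUnitSphereProd (EuclideanSpace ℝ (Fin (k+1)))).toMeasurableEquiv mp
  have h3 := mp2.map_eq
  have h4 : (fun p : Metric.sphere (0 : EuclideanSpace ℝ (Fin (k+1))) 1 × Set.Ioi (0:ℝ) =>
          p.2.1 • p.1.1) = Subtype.val ∘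
    (homeomorphUnitSphereProd (EuclideanSpace ℝ (Fin (k+1)))).toMeasurableEquiv.symm := by
    ext p
    simp [homeomorphUnitSphereProd]
  rw [h4, ← Measure.map_map measurable_subtype_coe (MeasurableEquiv.measurable _), h3,
    map_comap_subtype_coe (measurableSet_singleton _).compl, MeasureTheory.restrict_compl_singleton]

lemma transport (k : ℕ) (g : ℝ → ℝ) (hg : ∀ r, g r ∈ Set.Icc (0 : ℝ) 1)
    (hgint : ∫ x : EuclideanSpace ℝ (Fin (k+1)), g ‖x‖ = 1)
    (rn : ℝ) (hrn : 0 < rn)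
    (hDn : volume (Metric.closedBall (0 : EuclideanSpace ℝ (Fin (k+1))) rn) = 1) :
    ∃ c : EuclideanSpace ℝ (Fin (k+1)) → ℝ, Measurable c ∧ (∀ x, 0 ≤ c x) ∧ (∀ x, c x ≤ 1) ∧
      (volume.withDensity fun x => ENNReal.ofReal (g ‖x‖)).map (fun x => c x • x) =
        volume.restrict (Metric.closedBall (0 : EuclideanSpace ℝ (Fin (k+1))) rn) := by
  have hgi : Integrable (fun x : EuclideanSpace ℝ (Fin (k+1)) => g ‖x‖) := by
    by_contra h
    rw [integral_undef h] at hgint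
    exact zero_ne_one hgint
  have hP := polar_map k
  set P : Metric.sphere (0 : EuclideanSpace ℝ (Fin (k+1))) 1 × Set.Ioi (0:ℝ) →
    EuclideanSpace ℝ (Fin (k+1)) := fun p => p.2.1 • p.1.1 with hPdef
  have hPm : Measurable P := by fun_prop
  have hPn : ∀ p, ‖P p‖ = p.2.1 := fun p => by
    have := p.2.2.out
    simp [hPdef, norm_smul, abs_of_pos this]
  set σ := (volume : Measure (EuclideanSpace ℝ (Fin (k+1)))).toSphere with hσ
  have hσ0 : σ ≠ 0 := Measure.toSphere_ne_zero _
  set ν := Measure.volumeIoiPow k with hν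
  set h : Set.Ioi (0:ℝ) → ENNReal := fun r => ENNReal.ofReal (g r.1) with hh
  set μ := volume.withDensity fun x : EuclideanSpace ℝ (Fin (k+1)) => ENNReal.ofReal (g ‖x‖) with hμ
  have hgam : AEMeasurable (fun x : EuclideanSpace ℝ (Fin (k+1)) => ENNReal.ofReal (g ‖x‖)) :=
    hgi.aemeasurable.ennreal_ofReal
  have hprodm : AEMeasurable (fun p : Metric.sphere (0 : EuclideanSpace ℝ (Fin (k+1))) 1 × Set.Ioi (0:ℝ) => h p.2) (σ.prod ν) := by
    have := (hP.symm ▸ hgam).comp_measurable hPm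
    refine this.congr (Filter.Eventually.of_forall fun p => ?_)
    simp [hh, hPn]
  have hhm : AEMeasurable h ν := by
    have h1 := hprodm.aestronglyMeasurable.prodMk_left
    have : (ae σ).NeBot := ae_neBot.2 hσ0
    obtain ⟨x, hx⟩ := h1.exists
    exact hx.aemeasurable
  -- polar form of a measure with radial density
  have key : ∀ f : ℝ → ENNReal, AEMeasurable (fun r : Set.Ioi (0:ℝ) => f r.1) ν →
      AEMeasurable (fun x : EuclideanSpace ℝ (Fin (k+1)) => f ‖x‖) volume →
      volume.withDensity (fun x : EuclideanSpace ℝ (Fin (k+1)) => f ‖x‖) =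
        (σ.prod (ν.withDensity fun r => f r.1)).map P := by
    intro f hf hf2
    rw [prod_withDensity_right₀ hf]
    ext s hs
    rw [Measure.map_apply hPm hs, withDensity_apply _ hs, withDensity_apply _ (hPm hs), ← hP,
      Measure.restrict_map hPm hs, lintegral_map' _ hPm.aemeasurable]
    · simp only [hPn]
    · rw [← Measure.restrict_map hPm hs, hP]
      exact hf2.restrict
  have hμP : μ = (σ.prod (ν.withDensity h)).map P := key (fun r => ENNReal.ofReal (g r)) hhm hgam
  let R : Set.Ioi (0:ℝ) := ⟨rn, hrn⟩
  have hBP : volume.restrict (Metric.closedBall (0 : EuclideanSpace ℝ (Fin (k+1))) rn) =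
      (σ.prod (ν.restrict (Set.Iic R))).map P := by
    have hpre : P ⁻¹' (Metric.closedBall (0 : EuclideanSpace ℝ (Fin (k+1))) rn) =
        Set.univ ×ˢ Set.Iic R := by
      ext p
      simp only [Set.mem_preimage, mem_closedBall_zero_iff, hPn, Set.mem_prod, Set.mem_univ,
        true_and, Set.mem_Iic]
      rfl
    rw [← hP, Measure.restrict_map hPm Metric.isClosed_closedBall.measurableSet, hpre,
      ← Measure.prod_restrict, Measure.restrict_univ]
  have hμ1 : μ Set.univ = 1 := by
    rw [hμ, withDensity_apply _ MeasurableSet.univ, Measure.restrict_univ,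
      ← ofReal_integral_eq_lintegral_ofReal hgi (Filter.Eventually.of_forall fun x => (hg _).1),
      hgint, ENNReal.ofReal_one]
  have hR : ν.withDensity h Set.univ = ν (Set.Iic R) := by
    have h1 : σ Set.univ * ν.withDensity h Set.univ = 1 := by
      rw [← hμ1, hμP, Measure.map_apply hPm MeasurableSet.univ, Set.preimage_univ,
        ← Set.univ_prod_univ, Measure.prod_prod]
    have h2 : σ Set.univ * ν (Set.Iic R) = 1 := by
      rw [← hDn, ← Measure.restrict_apply_univ (Metric.closedBall _ _), hBP,
        Measure.map_apply hPm MeasurableSet.univ, Set.preimage_univ,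
        ← Set.univ_prod_univ, Measure.prod_prod, Measure.restrict_apply_univ]
    have h3 := h1.trans h2.symm
    exact (ENNReal.mul_right_inj (by simpa using hσ0) (measure_ne_top _ _)).1 h3
  obtain ⟨φ, hφm, hφle, hφ⟩ := transport1 k h
    (fun r => by simpa [hh] using (hg r.1).2) R hR
  have : SFinite (ν.withDensity h) := inferInstance
  let c1 : ℝ → ℝ := fun r => if hr : 0 < r then (φ ⟨r, hr⟩).1 / r else 0
  have hc1m : Measurable c1 := by
    refine Measurable.dite (s := {r | 0 < r}) (f := fun r => (φ r).1 / r.1) (g := fun _ => 0) ?_ ?_ (measurableSet_lt measurable_const measurable_id)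
    · exact (measurable_subtype_coe.comp hφm).div measurable_subtype_coe
    · exact measurable_const
  have hc1 : ∀ r : Set.Ioi (0:ℝ), c1 r.1 = (φ r).1 / r.1 := fun r => by
    simp only [c1]
    rw [dif_pos r.2.out]
  refine ⟨fun x => c1 ‖x‖, hc1m.comp measurable_norm, fun x => ?_, fun x => ?_, ?_⟩
  · by_cases hx : 0 < ‖x‖
    · have := hc1 ⟨‖x‖, hx⟩
      beta_reduce
      simp only at this
      rw [this]
      exact div_nonneg (φ _).2.out.le hx.le
    · simp [c1, dif_neg hx]
  · by_cases hx : 0 < ‖x‖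
    · have := hc1 ⟨‖x‖, hx⟩
      beta_reduce
      simp only at this
      rw [this, div_le_one hx]
      exact hφle _
    · simp [c1, dif_neg hx]
  · have hTm : Measurable (fun x : EuclideanSpace ℝ (Fin (k+1)) => c1 ‖x‖ • x) :=
      (hc1m.comp measurable_norm).smul measurable_id
    have hcomp : (fun x : EuclideanSpace ℝ (Fin (k+1)) => c1 ‖x‖ • x) ∘ P =
        P ∘ Prod.map id φ := by
      ext1 p
      have hp := p.2.2.out
      simp only [Function.comp, hPn, hc1]
      simp only [hPdef, Prod.map, id, smul_smul]
      rw [div_mul_cancel₀ _ hp.ne']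
    rw [hBP, hμP, Measure.map_map hTm hPm, hcomp,
      ← Measure.map_map hPm (measurable_id.prodMap hφm), ← Measure.map_prod_map _ _ measurable_id hφm,
      hφ, Measure.map_id]

/-- Coordinate-wise decreasing functionals are maximized by uniform distributions on balls. -/
theorem coordinatewise_decreasing_maximized (n N : ℕ)
    (F : (Fin N → EuclideanSpace ℝ (Fin n)) → ℝ)
    (hF0 : ∀ X, 0 ≤ F X)
    (hFmono : ∀ (X : Fin N → EuclideanSpace ℝ (Fin n)) (s t : Fin N → ℝ),
      (∀ i, 0 ≤ s i) → (∀ i, s i ≤ t i) →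
      F (fun i => t i • X i) ≤ F (fun i => s i • X i))
    (g : Fin N → ℝ → ℝ) (hg : ∀ i r, g i r ∈ Set.Icc (0 : ℝ) 1)
    (hgint : ∀ i, ∫ x : EuclideanSpace ℝ (Fin n), g i ‖x‖ = 1)
    (rn : ℝ) (hrn : 0 < rn)
    (hDn : volume (Metric.closedBall (0 : EuclideanSpace ℝ (Fin n)) rn) = 1)
    (hint1 : Integrable (fun X : Fin N → EuclideanSpace ℝ (Fin n) =>
      F X * ∏ i, g i ‖X i‖))
    (hint2 : Integrable (fun X : Fin N → EuclideanSpace ℝ (Fin n) =>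
      F X * ∏ i, Set.indicator (Metric.closedBall (0 : EuclideanSpace ℝ (Fin n)) rn)
        (fun _ => (1 : ℝ)) (X i))) :
    ∫ X : Fin N → EuclideanSpace ℝ (Fin n), F X * ∏ i, g i ‖X i‖ ≤
      ∫ X : Fin N → EuclideanSpace ℝ (Fin n),
        F X * ∏ i, Set.indicator (Metric.closedBall (0 : EuclideanSpace ℝ (Fin n)) rn)
          (fun _ => (1 : ℝ)) (X i) := by
  rcases n with _ | k
  · refine integral_mono hint1 hint2 fun X => ?_
    refine mul_le_mul_of_nonneg_left ?_ (hF0 X)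
    refine Finset.prod_le_prod (fun i _ => (hg i _).1) fun i _ => ?_
    have : X i ∈ Metric.closedBall (0 : EuclideanSpace ℝ (Fin 0)) rn := by
      rw [Subsingleton.elim (X i) 0]
      exact Metric.mem_closedBall_self hrn.le
    rw [Set.indicator_of_mem this]
    exact (hg i _).2
  have hgi : ∀ i, Integrable (fun x : EuclideanSpace ℝ (Fin (k+1)) => g i ‖x‖) := fun i => by
    by_contra h
    have := hgint i
    rw [integral_undef h] at this
    exact zero_ne_one this
  choose c hcm hc0 hc1 hcmap using fun i => transport k (g i) (hg i) (hgint i) rn hrn hDn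
  set μ : Fin N → Measure (EuclideanSpace ℝ (Fin (k+1))) :=
    fun i => volume.withDensity fun x => ENNReal.ofReal (g i ‖x‖) with hμ
  have hTm : ∀ i, Measurable fun x => c i x • x := fun i => (hcm i).smul measurable_id
  set B := Metric.closedBall (0 : EuclideanSpace ℝ (Fin (k+1))) rn with hB
  have hBm : MeasurableSet B := Metric.isClosed_closedBall.measurableSet
  have hpiB : MeasurableSet (Set.univ.pi fun _ : Fin N => B) := MeasurableSet.univ_pi fun _ => hBm
  let T : (Fin N → EuclideanSpace ℝ (Fin (k+1))) → (Fin N → EuclideanSpace ℝ (Fin (k+1))) :=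
    fun X i => c i (X i) • X i
  have hT : Measurable T := measurable_pi_lambda _ fun i => (hTm i).comp (measurable_pi_apply i)
  have hmap : (Measure.pi μ).map T = volume.restrict (Set.univ.pi fun _ : Fin N => B) := by
    have : ∀ i, SigmaFinite ((μ i).map fun x => c i x • x) := fun i => by
      rw [hcmap i]; infer_instance
    have h1 := Measure.pi_map_pi (μ := μ) (f := fun i x => c i x • x)
      (fun i => (hTm i).aemeasurable)
    rw [volume_pi, Measure.restrict_pi_pi]
    refine h1.trans ?_
    congr 1
    funext i
    exact hcmap i
  have hind : (fun X : Fin N → EuclideanSpace ℝ (Fin (k+1)) => F X * ∏ i, B.indicator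
      (fun _ => (1 : ℝ)) (X i)) = (Set.univ.pi fun _ : Fin N => B).indicator F := by
    funext X
    by_cases hX : X ∈ Set.univ.pi fun _ : Fin N => B
    · rw [Set.indicator_of_mem hX, Finset.prod_eq_one, mul_one]
      intro i _
      exact Set.indicator_of_mem (hX i trivial) _
    · rw [Set.indicator_of_notMem hX]
      simp only [Set.mem_pi, Set.mem_univ, true_imp_iff, not_forall] at hX
      obtain ⟨i, hi⟩ := hX
      rw [Finset.prod_eq_zero (Finset.mem_univ i) (Set.indicator_of_notMem hi _), mul_zero]
  rw [hind] at hint2 ⊢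
  rw [integrable_indicator_iff hpiB, IntegrableOn, ← hmap] at hint2
  rw [integral_indicator hpiB, ← hmap, integral_map hT.aemeasurable hint2.1]
  have hFT : Integrable (F ∘ T) (Measure.pi μ) := hint2.comp_measurable hT
  have hpi := pi_wd (volume : Measure (EuclideanSpace ℝ (Fin (k+1)))) (fun i x => g i ‖x‖) hgi
    (fun i x => (hg i _).1)
  rw [← volume_pi] at hpi
  have hprod0 : ∀ X : Fin N → EuclideanSpace ℝ (Fin (k+1)), 0 ≤ ∏ i, g i ‖X i‖ := fun X =>
    Finset.prod_nonneg fun i _ => (hg i _).1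
  have hpm : AEMeasurable (fun X : Fin N → EuclideanSpace ℝ (Fin (k+1)) =>
      ENNReal.ofReal (∏ i, g i ‖X i‖)) := by
    have := Integrable.fintype_prod (μ := fun _ : Fin N => (volume : Measure (EuclideanSpace ℝ (Fin (k+1))))) hgi
    exact this.aemeasurable.ennreal_ofReal
  have hlt : ∀ᵐ X : Fin N → EuclideanSpace ℝ (Fin (k+1)),
      ENNReal.ofReal (∏ i, g i ‖X i‖) < ⊤ := Filter.Eventually.of_forall fun X => ENNReal.ofReal_lt_top
  have e1 : (fun X : Fin N → EuclideanSpace ℝ (Fin (k+1)) => F X * ∏ i, g i ‖X i‖) =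
      fun X => (ENNReal.ofReal (∏ i, g i ‖X i‖)).toReal • F X := by
    funext X
    rw [ENNReal.toReal_ofReal (hprod0 X), smul_eq_mul, mul_comm]
  have hF1 : Integrable F (Measure.pi μ) := by
    rw [e1] at hint1
    rw [hpi]
    exact (integrable_withDensity_iff_integrable_smul₀' hpm hlt).2 hint1
  calc _ = ∫ X, F X ∂(Measure.pi μ) := by
        rw [e1, hpi, integral_withDensity_eq_integral_toReal_smul₀ hpm hlt]
    _ ≤ _ := integral_mono hF1 hFT fun X => by
        have := hFmono X (fun i => c i (X i)) (fun _ => 1) (fun i => hc0 i _) (fun i => hc1 i _)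
        simpa using this
end
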